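/- For an integer N ≥ 1, let P_N be the probability measure on S^{N+1} given by P_N(x_0,…,x_N) = ρ(x_0) · Π_{k=0}^{N−1} p(x_{k+1}|x_k), and let Q_N be the image of P_N under the path-reversal map (x_0,…,x_N) ↦ (x_N,…,x_0). Then the Kullback–Leibler divergence satisfies D(P_N ‖ Q_N) = N · Σ_{b∈S} ρ(b) Σ_{a∈S} p(a|b) [ln p(a|b) − ln p(b|a)]. -/

import Mathlib

open scoped BigOperators

/-! In the logarithm of `P_N(x) / Q_N(x)` the initial weights contribute the boundary term
`ln ρ(x_0) − ln ρ(x_N)`, which has mean zero because `x_0` and `x_N` both have law `ρ`. The rest is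
a sum over the `N` transitions of `x`, and by stationarity each transition from `b` to `a` has
weight `p(a|b) ρ(b)`. If every possible transition has a possible reversal, then so does every path
of nonzero weight, and the logarithm splits on the support of `P_N`. -/

lemma sum_pi_fin_succ_eq_sum_snoc {S M : Type*} [Fintype S] [AddCommMonoid M] {n : ℕ}
    (F : (Fin (n + 1) → S) → M) :
    ∑ x, F x = ∑ y : Fin n → S, ∑ a, F (Fin.snoc (α := fun _ => S) y a) := by
  rw [← (Fin.snocEquiv fun _ : Fin (n + 1) => S).sum_comp, Fintype.sum_prod_type_right]
  rfl

/-- The weight `ρ(x_0) ∏_{k<N} p(x_{k+1}|x_k)` of the path `x` of a Markov chain with transition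
probabilities `p a b = p(a|b)` and initial weights `ρ`. -/
def pathWeight {S R : Type*} [CommMonoid R] (p : S → S → R) (ρ : S → R) {N : ℕ}
    (x : Fin (N + 1) → S) : R :=
  ρ (x 0) * ∏ k : Fin N, p (x k.succ) (x k.castSucc)

section Algebra

variable {S R : Type*}

lemma pathWeight_rev [CommMonoid R] (p : S → S → R) (ρ : S → R) {N : ℕ} (x : Fin (N + 1) → S) :
    pathWeight p ρ (fun k => x k.rev) =
      ρ (x (Fin.last N)) * ∏ k : Fin N, p (x k.castSucc) (x k.succ) := by
  rw [pathWeight, ← Equiv.prod_comp Fin.revPerm fun k : Fin N => p (x k.castSucc) (x k.succ)]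
  simp [Fin.rev_succ, Fin.rev_castSucc]

lemma pathWeight_snoc [CommMonoid R] (p : S → S → R) (ρ : S → R) {N : ℕ}
    (y : Fin (N + 1) → S) (a : S) :
    pathWeight p ρ (Fin.snoc (α := fun _ => S) y a) = pathWeight p ρ y * p a (y (Fin.last N)) := by
  have snoc_zero : Fin.snoc (α := fun _ => S) y a 0 = y 0 :=
    Fin.snoc_castSucc (α := fun _ => S) a y 0
  simp only [pathWeight, Fin.prod_univ_castSucc (n := N), Fin.succ_castSucc, Fin.snoc_castSucc,
    Fin.succ_last, Fin.snoc_last, snoc_zero, mul_assoc]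

variable [Fintype S] [CommSemiring R] (p : S → S → R) (ρ : S → R)

lemma sum_pathWeight_mul_succ {N : ℕ} (F : (Fin (N + 2) → S) → R) :
    ∑ x, pathWeight p ρ x * F x =
      ∑ y : Fin (N + 1) → S, pathWeight p ρ y *
        ∑ a, p a (y (Fin.last N)) * F (Fin.snoc (α := fun _ => S) y a) := by
  simp only [sum_pi_fin_succ_eq_sum_snoc, pathWeight_snoc, Finset.mul_sum, mul_assoc]

lemma sum_pathWeight_mul_of_length_zero (f : S → R) :
    ∑ x : Fin 1 → S, pathWeight p ρ x * f (x 0) = ∑ b, ρ b * f b := by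
  rw [← (Equiv.funUnique (Fin 1) S).symm.sum_comp]
  simp [pathWeight]

variable {p ρ}

lemma sum_pathWeight_mul_init (hpsum : ∀ b, ∑ a, p a b = 1) {N : ℕ}
    (F : (Fin (N + 1) → S) → R) :
    ∑ x : Fin (N + 2) → S, pathWeight p ρ x * F (Fin.init x) = ∑ y, pathWeight p ρ y * F y := by
  simp only [sum_pathWeight_mul_succ, Fin.init_snoc, ← Finset.sum_mul, hpsum, one_mul]

lemma sum_pathWeight_mul_zero (hpsum : ∀ b, ∑ a, p a b = 1) (N : ℕ) (f : S → R) :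
    ∑ x : Fin (N + 1) → S, pathWeight p ρ x * f (x 0) = ∑ b, ρ b * f b := by
  induction N with
  | zero => exact sum_pathWeight_mul_of_length_zero p ρ f
  | succ N ih => exact (sum_pathWeight_mul_init hpsum fun y => f (y 0)).trans ih

lemma sum_pathWeight_mul_last (hstat : ∀ a, ∑ b, p a b * ρ b = ρ a) (N : ℕ) (f : S → R) :
    ∑ x : Fin (N + 1) → S, pathWeight p ρ x * f (x (Fin.last N)) = ∑ b, ρ b * f b := by
  induction N generalizing f with
  | zero => exact sum_pathWeight_mul_of_length_zero p ρ f
  | succ N ih =>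
    calc ∑ x : Fin (N + 2) → S, pathWeight p ρ x * f (x (Fin.last (N + 1)))
        = ∑ y : Fin (N + 1) → S, pathWeight p ρ y * ∑ a, p a (y (Fin.last N)) * f a := by
          simp only [sum_pathWeight_mul_succ, Fin.snoc_last]
      _ = ∑ b, ρ b * ∑ a, p a b * f a := ih fun b => ∑ a, p a b * f a
      _ = ∑ a, (∑ b, p a b * ρ b) * f a := by
          simp only [Finset.mul_sum, Finset.sum_mul]
          rw [Finset.sum_comm]
          simp only [mul_left_comm, mul_assoc]
      _ = ∑ a, ρ a * f a := by simp only [hstat]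

lemma sum_pathWeight_mul_sum_transitions (hpsum : ∀ b, ∑ a, p a b = 1)
    (hstat : ∀ a, ∑ b, p a b * ρ b = ρ a) (N : ℕ) (g : S → S → R) :
    ∑ x : Fin (N + 1) → S, pathWeight p ρ x * ∑ k : Fin N, g (x k.succ) (x k.castSucc) =
      N * ∑ b, ρ b * ∑ a, p a b * g a b := by
  induction N with
  | zero => simp
  | succ N ih =>
    have last_transition :
        ∑ x : Fin (N + 2) → S, pathWeight p ρ x *
            g (x (Fin.last (N + 1))) (x (Fin.last N).castSucc) =
          ∑ b, ρ b * ∑ a, p a b * g a b := by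
      simp only [sum_pathWeight_mul_succ, Fin.snoc_last, Fin.snoc_castSucc]
      exact sum_pathWeight_mul_last hstat N fun b => ∑ a, p a b * g a b
    have earlier_transitions :
        ∑ x : Fin (N + 2) → S, pathWeight p ρ x *
            ∑ k : Fin N, g (x k.castSucc.succ) (x k.castSucc.castSucc) =
          N * ∑ b, ρ b * ∑ a, p a b * g a b :=
      (sum_pathWeight_mul_init hpsum fun y => ∑ k : Fin N, g (y k.succ) (y k.castSucc)).trans ih
    simp only [Fin.sum_univ_castSucc (n := N), Fin.succ_last, mul_add, Finset.sum_add_distrib]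
    rw [earlier_transitions, last_transition]
    push_cast
    ring

end Algebra

section Support

variable {S R : Type*} {N : ℕ} {p : S → S → R} {ρ : S → R} {x : Fin (N + 1) → S}

lemma transition_ne_zero_of_pathWeight_ne_zero [CommMonoidWithZero R]
    (hx : pathWeight p ρ x ≠ 0) (k : Fin N) : p (x k.succ) (x k.castSucc) ≠ 0 :=
  fun h => right_ne_zero_of_mul hx (Finset.prod_eq_zero (Finset.mem_univ k) h)

lemma stationary_pos_of_pathWeight_ne_zero [Fintype S] [CommSemiring R] [PartialOrder R]
    [IsStrictOrderedRing R] (hp : ∀ a b, 0 ≤ p a b) (hρ : ∀ b, 0 ≤ ρ b)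
    (hstat : ∀ a, ∑ b, p a b * ρ b = ρ a) (hx : pathWeight p ρ x ≠ 0) (k : Fin (N + 1)) :
    0 < ρ (x k) := by
  induction k using Fin.induction with
  | zero => exact (hρ _).lt_of_ne' (left_ne_zero_of_mul hx)
  | succ k ih =>
    have transition_pos : 0 < p (x k.succ) (x k.castSucc) :=
      (hp _ _).lt_of_ne' (transition_ne_zero_of_pathWeight_ne_zero hx k)
    calc 0 < p (x k.succ) (x k.castSucc) * ρ (x k.castSucc) := mul_pos transition_pos ih
      _ ≤ ∑ b, p (x k.succ) b * ρ b :=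
          Finset.single_le_sum (f := fun b => p (x k.succ) b * ρ b)
            (fun b _ => mul_nonneg (hp _ b) (hρ b)) (Finset.mem_univ _)
      _ = ρ (x k.succ) := hstat _

lemma pathWeight_rev_ne_zero [CommMonoidWithZero R] [NoZeroDivisors R]
    (hlast : ρ (x (Fin.last N)) ≠ 0) (hrev : ∀ a b, p a b ≠ 0 → p b a ≠ 0)
    (hx : pathWeight p ρ x ≠ 0) : pathWeight p ρ (fun k => x k.rev) ≠ 0 := by
  have : Nontrivial R := ⟨_, _, hx⟩
  rw [pathWeight_rev]
  exact mul_ne_zero hlast <| Finset.prod_ne_zero_iff.2 fun k _ =>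
    hrev _ _ (transition_ne_zero_of_pathWeight_ne_zero hx k)

end Support

lemma log_pathWeight {S : Type*} {p : S → S → ℝ} {ρ : S → ℝ} {N : ℕ} {x : Fin (N + 1) → S}
    (hx : pathWeight p ρ x ≠ 0) :
    Real.log (pathWeight p ρ x) =
      Real.log (ρ (x 0)) + ∑ k : Fin N, Real.log (p (x k.succ) (x k.castSucc)) := by
  rw [pathWeight, Real.log_mul (left_ne_zero_of_mul hx) (right_ne_zero_of_mul hx),
    Real.log_prod fun k _ => transition_ne_zero_of_pathWeight_ne_zero hx k]

lemma log_pathWeight_div_rev {S : Type*} {p : S → S → ℝ} {ρ : S → ℝ} {N : ℕ}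
    {x : Fin (N + 1) → S} (hx : pathWeight p ρ x ≠ 0)
    (hrev : pathWeight p ρ (fun k => x k.rev) ≠ 0) :
    Real.log (pathWeight p ρ x / pathWeight p ρ (fun k => x k.rev)) =
      Real.log (ρ (x 0)) - Real.log (ρ (x (Fin.last N))) +
        ∑ k : Fin N, (Real.log (p (x k.succ) (x k.castSucc)) -
          Real.log (p (x k.castSucc) (x k.succ))) := by
  rw [Real.log_div hx hrev, log_pathWeight hx]
  rw [pathWeight_rev] at hrev ⊢
  have prod_ne_zero := right_ne_zero_of_mul hrev
  rw [Real.log_mul (left_ne_zero_of_mul hrev) prod_ne_zero,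
    Real.log_prod (Finset.prod_ne_zero_iff.1 prod_ne_zero), Finset.sum_sub_distrib]
  ring

theorem markov_chain_path_relative_entropy_eq_entropy_production_general
    {S : Type*} [Fintype S] {p : S → S → ℝ} {ρ : S → ℝ}
    (hp : ∀ a b, 0 ≤ p a b) (hrev : ∀ a b, p a b ≠ 0 → p b a ≠ 0)
    (hpsum : ∀ b, ∑ a, p a b = 1) (hρ : ∀ b, 0 ≤ ρ b)
    (hstat : ∀ a, ∑ b, p a b * ρ b = ρ a) (N : ℕ) :
    ∑ x : Fin (N + 1) → S, pathWeight p ρ x *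
        Real.log (pathWeight p ρ x / pathWeight p ρ (fun k => x k.rev)) =
      N * ∑ b, ρ b * ∑ a, p a b * (Real.log (p a b) - Real.log (p b a)) := by
  have weighted_log_ratio (x : Fin (N + 1) → S) :
      pathWeight p ρ x * Real.log (pathWeight p ρ x / pathWeight p ρ (fun k => x k.rev)) =
        pathWeight p ρ x * (Real.log (ρ (x 0)) - Real.log (ρ (x (Fin.last N))) +
          ∑ k : Fin N, (Real.log (p (x k.succ) (x k.castSucc)) -
            Real.log (p (x k.castSucc) (x k.succ)))) := by
    by_cases hx : pathWeight p ρ x = 0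
    · simp only [hx, zero_mul]
    · have hlast := (stationary_pos_of_pathWeight_ne_zero hp hρ hstat hx (Fin.last N)).ne'
      rw [log_pathWeight_div_rev hx (pathWeight_rev_ne_zero hlast hrev hx)]
  have boundary_mean_zero :
      ∑ x : Fin (N + 1) → S, pathWeight p ρ x *
        (Real.log (ρ (x 0)) - Real.log (ρ (x (Fin.last N)))) = 0 := by
    simp only [mul_sub, Finset.sum_sub_distrib]
    rw [sum_pathWeight_mul_zero hpsum N fun b => Real.log (ρ b),
      sum_pathWeight_mul_last hstat N fun b => Real.log (ρ b), sub_self]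
  simp only [weighted_log_ratio, mul_add, Finset.sum_add_distrib]
  rw [boundary_mean_zero, zero_add]
  exact sum_pathWeight_mul_sum_transitions hpsum hstat N fun a b =>
    Real.log (p a b) - Real.log (p b a)

/-- Entropy production of a stationary finite-state Markov chain as a relative entropy
density: the Kullback–Leibler divergence of the path measure
`P_N(x) = ρ(x_0) Π_{k<N} p(x_{k+1}|x_k)` from its time reversal
`Q_N(x) = P_N(x_N,…,x_0)` (the image of `P_N` under the involutive path-reversal map)
equals `N · Σ_b ρ(b) Σ_a p(a|b) [ln p(a|b) − ln p(b|a)]`.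
Here `p a b` denotes the transition probability `p(a|b)`. -/
theorem markov_chain_path_relative_entropy_eq_entropy_production
    {S : Type*} [Fintype S] [Nonempty S] [DecidableEq S]
    (p : S → S → ℝ) (hp : ∀ a b, 0 < p a b) (hpsum : ∀ b, ∑ a, p a b = 1)
    (ρ : S → ℝ) (hρ : ∀ b, 0 < ρ b) (hρsum : ∑ b, ρ b = 1)
    (hstat : ∀ a, ∑ b, p a b * ρ b = ρ a)
    (N : ℕ) (hN : 1 ≤ N)
    (P : (Fin (N + 1) → S) → ℝ)
    (hP : ∀ x, P x = ρ (x 0) * ∏ k : Fin N, p (x k.succ) (x k.castSucc))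
    (Q : (Fin (N + 1) → S) → ℝ)
    (hQ : ∀ x, Q x = P (fun k => x k.rev)) :
    ∑ x : Fin (N + 1) → S, P x * Real.log (P x / Q x) =
      (N : ℝ) * ∑ b, ρ b * ∑ a, p a b * (Real.log (p a b) - Real.log (p b a)) := by
  obtain rfl : P = pathWeight p ρ := funext hP
  simpa only [hQ] using markov_chain_path_relative_entropy_eq_entropy_production_general
    (fun a b => (hp a b).le) (fun a b _ => (hp b a).ne') hpsum (fun b => (hρ b).le) hstat N
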